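/- The clones TN := Pol({0,1,2}; C_3, T, N, N*) and DM := Pol({0,1,2}; C_3, C_2, ≤_2) are minor equivalent: there exist a minor-preserving map from DM to TN and a minor-preserving map from TN to DM. -/

import Mathlib

/-- The three-element domain `{0,1,2}`. -/
abbrev D3 : Type := Fin 3

/-- `n`-ary operations on `{0,1,2}`. -/
abbrev Op (n : ℕ) : Type := (Fin n → D3) → D3

/-- An `n`-ary operation `f` preserves a `k`-ary relation `R`. -/
def Preserves {n k : ℕ} (f : Op n) (R : Set (Fin k → D3)) : Prop :=
  ∀ t : Fin n → (Fin k → D3), (∀ i, t i ∈ R) → (fun j => f fun i => t i j) ∈ R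

/-- `C₃ = {(0,1),(1,2),(2,0)}`. -/
def C3rel : Set (Fin 2 → D3) :=
  { t | (t 0 = 0 ∧ t 1 = 1) ∨ (t 0 = 1 ∧ t 1 = 2) ∨ (t 0 = 2 ∧ t 1 = 0) }

/-- `T = {(0,1),(1,0),(2,2)}`. -/
def Trel : Set (Fin 2 → D3) :=
  { t | (t 0 = 0 ∧ t 1 = 1) ∨ (t 0 = 1 ∧ t 1 = 0) ∨ (t 0 = 2 ∧ t 1 = 2) }

/-- `N = {(0,0),(1,0),(1,1),(1,2)}`. -/
def Nrel : Set (Fin 2 → D3) :=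
  { t | (t 0 = 0 ∧ t 1 = 0) ∨ (t 0 = 1 ∧ t 1 = 0) ∨ (t 0 = 1 ∧ t 1 = 1) ∨ (t 0 = 1 ∧ t 1 = 2) }

/-- `N* = {(0,0),(0,1),(1,1),(0,2)}`. -/
def Nstarrel : Set (Fin 2 → D3) :=
  { t | (t 0 = 0 ∧ t 1 = 0) ∨ (t 0 = 0 ∧ t 1 = 1) ∨ (t 0 = 1 ∧ t 1 = 1) ∨ (t 0 = 0 ∧ t 1 = 2) }

/-- `C₂ = {(0,1),(1,0)}`. -/
def C2rel : Set (Fin 2 → D3) :=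
  { t | (t 0 = 0 ∧ t 1 = 1) ∨ (t 0 = 1 ∧ t 1 = 0) }

/-- `≤₂ = {(0,0),(0,1),(1,1)}`. -/
def le2rel : Set (Fin 2 → D3) :=
  { t | (t 0 = 0 ∧ t 1 = 0) ∨ (t 0 = 0 ∧ t 1 = 1) ∨ (t 0 = 1 ∧ t 1 = 1) }

/-- The polymorphism clone of a family of relations on `{0,1,2}`. -/
def Pol (A : Set (Σ k : ℕ, Set (Fin k → D3))) : ∀ n, Set (Op n) :=
  fun n => { f | ∀ R ∈ A, Preserves f R.2 }

/-- The clone `TN = Pol({0,1,2}; C₃, T, N, N*)`. -/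
def TNclone : ∀ n, Set (Op n) :=
  Pol ({⟨2, C3rel⟩, ⟨2, Trel⟩, ⟨2, Nrel⟩, ⟨2, Nstarrel⟩} : Set (Σ k : ℕ, Set (Fin k → D3)))

/-- The clone `DM = Pol({0,1,2}; C₃, C₂, ≤₂)`. -/
def DMclone : ∀ n, Set (Op n) :=
  Pol ({⟨2, C3rel⟩, ⟨2, C2rel⟩, ⟨2, le2rel⟩} : Set (Σ k : ℕ, Set (Fin k → D3)))

/-- The minor `f_π` of an `n`-ary operation `f` along `π`. -/
def minor {n r : ℕ} (f : Op n) (π : Fin n → Fin r) : Op r :=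
  fun x => f fun i => x (π i)

/-- `ξ` is a minor-preserving map from `C` to `D`. -/
def IsMinorHom (C D : ∀ n, Set (Op n)) (ξ : ∀ n, Op n → Op n) : Prop :=
  (∀ n, ∀ f ∈ C n, ξ n f ∈ D n) ∧
  (∀ (n r : ℕ) (f : Op n) (π : Fin n → Fin r), f ∈ C n → ξ r (minor f π) = minor (ξ n f) π)

/-- Value of `f` on the indicator of `{j | x j = i}`. -/
def bInd {n : ℕ} (f : Op n) (x : Fin n → D3) (i : D3) : D3 :=
  f fun j => if x j = i then 1 else 0

/-- The minor map from `DM` to `TN`. -/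
def gMap (n : ℕ) (f : Op n) : Op n := fun x =>
  if bInd f x 0 = 1 then 0 else if bInd f x 1 = 1 then 1 else if bInd f x 2 = 1 then 2
  else 2 * (f x - f (fun j => - x j))

lemma C3_iff (t : Fin 2 → D3) : t ∈ C3rel ↔ t 1 = t 0 + 1 := by
  simp only [C3rel, Set.mem_ofPred_eq]
  generalize t 0 = a
  generalize t 1 = b
  revert a b; decide

lemma T_iff (t : Fin 2 → D3) : t ∈ Trel ↔ t 1 = 1 - t 0 := by
  simp only [Trel, Set.mem_ofPred_eq]
  generalize t 0 = a
  generalize t 1 = b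
  revert a b; decide

lemma N_iff (t : Fin 2 → D3) : t ∈ Nrel ↔ t 0 ≠ 2 ∧ (t 0 = 0 → t 1 = 0) := by
  simp only [Nrel, Set.mem_ofPred_eq]
  generalize t 0 = a
  generalize t 1 = b
  revert a b; decide

lemma Ns_iff (t : Fin 2 → D3) : t ∈ Nstarrel ↔ t 0 ≠ 2 ∧ (t 0 = 1 → t 1 = 1) := by
  simp only [Nstarrel, Set.mem_ofPred_eq]
  generalize t 0 = a
  generalize t 1 = b
  revert a b; decide

lemma C2_iff (t : Fin 2 → D3) : t ∈ C2rel ↔ t 0 ≠ 2 ∧ t 1 = 1 - t 0 := by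
  simp only [C2rel, Set.mem_ofPred_eq]
  generalize t 0 = a
  generalize t 1 = b
  revert a b; decide

lemma le2_iff (t : Fin 2 → D3) : t ∈ le2rel ↔ t 0 ≠ 2 ∧ t 1 ≠ 2 ∧ (t 0 = 1 → t 1 = 1) := by
  simp only [le2rel, Set.mem_ofPred_eq]
  generalize t 0 = a
  generalize t 1 = b
  revert a b; decide

section DMfacts
variable {n : ℕ} {f : Op n}

lemma dm_c3 (hf : f ∈ DMclone n) (x : Fin n → D3) : f (fun i => x i + 1) = f x + 1 := by
  have h := hf ⟨2, C3rel⟩ (by simp) (fun i => ![x i, x i + 1]) (fun i => by simp [C3_iff])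
  simpa [C3_iff] using h

lemma dm_c2 (hf : f ∈ DMclone n) (x : Fin n → D3) (hx : ∀ i, x i ≠ 2) :
    f x ≠ 2 ∧ f (fun i => 1 - x i) = 1 - f x := by
  have h := hf ⟨2, C2rel⟩ (by simp) (fun i => ![x i, 1 - x i])
    (fun i => by simp [C2_iff, hx i])
  simpa [C2_iff] using h

lemma dm_le (hf : f ∈ DMclone n) (x y : Fin n → D3) (hx : ∀ i, x i ≠ 2) (hy : ∀ i, y i ≠ 2)
    (hxy : ∀ i, x i = 1 → y i = 1) : f x = 1 → f y = 1 := by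
  have h := hf ⟨2, le2rel⟩ (by simp) (fun i => ![x i, y i])
    (fun i => by simpa [le2_iff, hx i, hy i] using hxy i)
  have h2 := (le2_iff _).1 h
  simpa using h2.2.2

lemma ind_ne (x : Fin n → D3) (i : D3) (j : Fin n) : (if x j = i then (1 : D3) else 0) ≠ 2 := by
  split_ifs <;> decide

lemma b_mono (hf : f ∈ DMclone n) (x y : Fin n → D3) (i k : D3)
    (h : ∀ j, x j = i → y j = k) : bInd f x i = 1 → bInd f y k = 1 := by
  apply dm_le hf _ _ (ind_ne x i) (ind_ne y k)
  intro j
  by_cases hj : x j = i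
  · simp [hj, h j hj]
  · simp [hj]

lemma b_excl (hf : f ∈ DMclone n) (x : Fin n → D3) (i k : D3) (hik : i ≠ k)
    (h : bInd f x i = 1) : bInd f x k ≠ 1 := by
  intro hk
  have h1 := (dm_c2 hf _ (ind_ne x i)).2
  have h2 : f (fun j => 1 - (if x j = i then (1 : D3) else 0)) = 1 := by
    refine dm_le hf _ _ (ind_ne x k) ?_ ?_ hk
    · intro j; split_ifs <;> decide
    · intro j
      by_cases hj : x j = k
      · have : x j ≠ i := fun e => hik (e.symm.trans hj)
        simp [this]
      · simp [hj]
  rw [h2] at h1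
  unfold bInd at h
  rw [h] at h1
  exact absurd h1 (by decide)

lemma g_of_b (hf : f ∈ DMclone n) (x : Fin n → D3) (i : D3) (h : bInd f x i = 1) :
    gMap n f x = i := by
  have e := fun k hk => b_excl hf x i k hk h
  unfold gMap
  fin_cases i
  · simp at h; simp [h]
  · have := e 0 (by decide)
    simp at h; simp [h, this]
  · have h0 := e 0 (by decide)
    have h1 := e 1 (by decide)
    simp at h; simp [h, h0, h1]

lemma g_of_not (x : Fin n → D3) (h : ∀ i, bInd f x i ≠ 1) :
    gMap n f x = 2 * (f x - f (fun j => - x j)) := by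
  simp [gMap, h]

lemma g_two (hf : f ∈ DMclone n) (u : Fin n → D3) (hu : ∀ i, u i ≠ 2) :
    gMap n f u ≠ 2 ∧ bInd f u (gMap n f u) = 1 := by
  have e1 : bInd f u 1 = f u := by
    unfold bInd; congr 1; funext j
    have := hu j
    generalize u j = a at *
    revert a; decide
  have e0 : bInd f u 0 = 1 - f u := by
    rw [← (dm_c2 hf u hu).2]
    unfold bInd; congr 1; funext j
    have := hu j
    generalize u j = a at *
    revert a; decide
  have h2 := (dm_c2 hf u hu).1
  have key : bInd f u 0 = 1 ∨ bInd f u 1 = 1 := by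
    rw [e0, e1]
    clear e0 e1
    generalize f u = a at *
    revert a; decide
  rcases key with h | h
  · rw [g_of_b hf u 0 h]; exact ⟨by decide, h⟩
  · rw [g_of_b hf u 1 h]; exact ⟨by decide, h⟩

lemma g_c3 (hf : f ∈ DMclone n) (x : Fin n → D3) :
    gMap n f (fun i => x i + 1) = gMap n f x + 1 := by
  by_cases h : ∃ i, bInd f x i = 1
  · obtain ⟨i, hi⟩ := h
    rw [g_of_b hf x i hi]
    exact g_of_b hf _ _ (b_mono hf x _ i (i + 1) (fun j hj => by simp [hj]) hi)
  · push Not at h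
    rw [g_of_not x h, g_of_not _ (fun i hi => h (i - 1)
      (b_mono hf _ x i (i - 1) (fun j hj => by simp [← hj]) hi))]
    have h1 := dm_c3 hf x
    have h2 := dm_c3 hf (fun j => - (x j + 1))
    have h3 : (fun j => - (x j + 1) + 1) = fun j => - x j := by funext j; generalize x j = a; revert a; decide
    rw [h3] at h2
    rw [h1, h2]
    generalize f x = a
    generalize f _ = b
    revert a b; decide

lemma g_t (hf : f ∈ DMclone n) (x : Fin n → D3) :
    gMap n f (fun i => 1 - x i) = 1 - gMap n f x := by
  by_cases h : ∃ i, bInd f x i = 1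
  · obtain ⟨i, hi⟩ := h
    rw [g_of_b hf x i hi]
    exact g_of_b hf _ _ (b_mono hf x _ i (1 - i) (fun j hj => by simp [hj]) hi)
  · push Not at h
    rw [g_of_not x h, g_of_not _ (fun i hi => h (1 - i)
      (b_mono hf _ x i (1 - i) (fun j hj => by simp [← hj]) hi))]
    have h1 := dm_c3 hf (fun j => - x j)
    have h2 := dm_c3 hf (fun j => - (1 - x j))
    have h3 : (fun j => - (1 - x j) + 1) = x := by funext j; generalize x j = a; revert a; decide
    have h4 : (fun j => - x j + 1) = fun j => 1 - x j := by funext j; generalize x j = a; revert a; decide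
    rw [h3] at h2
    rw [h4] at h1
    rw [h1, h2]
    generalize f _ = a
    generalize f _ = b
    revert a b; decide

lemma g_mem (hf : f ∈ DMclone n) : gMap n f ∈ TNclone n := by
  intro R hR
  simp only [Set.mem_insert_iff, Set.mem_singleton_iff] at hR
  rcases hR with rfl | rfl | rfl | rfl
  · intro t ht
    rw [C3_iff]
    have : (fun i => t i 1) = fun i => t i 0 + 1 := funext fun i => (C3_iff _).1 (ht i)
    simp only [this]
    exact g_c3 hf _
  · intro t ht
    rw [T_iff]
    have : (fun i => t i 1) = fun i => 1 - t i 0 := funext fun i => (T_iff _).1 (ht i)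
    simp only [this]
    exact g_t hf _
  · intro t ht
    rw [N_iff]
    have ht' := fun i => (N_iff _).1 (ht i)
    have h := g_two hf (fun i => t i 0) (fun i => (ht' i).1)
    refine ⟨h.1, fun h0 => ?_⟩
    have h' := h.2
    rw [h0] at h'
    exact g_of_b hf _ _ (b_mono hf _ _ 0 0 (fun j => (ht' j).2) h')
  · intro t ht
    rw [Ns_iff]
    have ht' := fun i => (Ns_iff _).1 (ht i)
    have h := g_two hf (fun i => t i 0) (fun i => (ht' i).1)
    refine ⟨h.1, fun h0 => ?_⟩
    have h' := h.2
    rw [h0] at h'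
    exact g_of_b hf _ _ (b_mono hf _ _ 1 1 (fun j => (ht' j).2) h')

lemma tn_sub (hf : f ∈ TNclone n) : f ∈ DMclone n := by
  have hT := hf ⟨2, Trel⟩ (by simp)
  have hN := hf ⟨2, Nstarrel⟩ (by simp)
  have h01 : ∀ x : Fin n → D3, (∀ i, x i ≠ 2) → f x ≠ 2 := by
    intro x hx
    have h := hN (fun i => ![x i, x i]) (fun i => by simp [Ns_iff, hx i])
    have h2 := (Ns_iff _).1 h
    simpa using h2.1
  intro R hR
  simp only [Set.mem_insert_iff, Set.mem_singleton_iff] at hR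
  rcases hR with rfl | rfl | rfl
  · exact hf ⟨2, C3rel⟩ (by simp)
  · intro t ht
    have ht' := fun i => (C2_iff _).1 (ht i)
    rw [C2_iff]
    exact ⟨h01 _ fun i => (ht' i).1,
      (T_iff _).1 (hT t fun i => (T_iff _).2 (ht' i).2)⟩
  · intro t ht
    have ht' := fun i => (le2_iff _).1 (ht i)
    rw [le2_iff]
    exact ⟨h01 _ fun i => (ht' i).1, h01 _ fun i => (ht' i).2.1,
      ((Ns_iff _).1 (hN t fun i => (Ns_iff _).2 ⟨(ht' i).1, (ht' i).2.2⟩)).2⟩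

end DMfacts

/-- The clones `TN` and `DM` are minor equivalent. -/
theorem stmt9 :
    (∃ ξ, IsMinorHom DMclone TNclone ξ) ∧ (∃ ξ, IsMinorHom TNclone DMclone ξ) := by
  refine ⟨⟨gMap, fun n f hf => g_mem hf, fun n r f π _ => rfl⟩,
    ⟨fun n f => f, fun n f hf => tn_sub hf, fun n r f π _ => rfl⟩⟩
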